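/- Let X be a reflexive Banach space and A : X → X* a bounded, pseudo-monotone, and coercive operator (⟨Ax, x⟩/‖x‖ → ∞ as ‖x‖ → ∞). Then A is surjective: R(A) = X*. -/

import Mathlib

open Filter Topology

section
variable {X : Type*} [NormedAddCommGroup X] [NormedSpace ℝ X]

/-- Weak convergence of a sequence in a normed space. -/
def WeakConv (u : ℕ → X) (x : X) : Prop :=
  ∀ f : X →L[ℝ] ℝ, Tendsto (fun n => f (u n)) atTop (𝓝 (f x))

/-- An operator `A : X → X*` is pseudo-monotone (Brezis). -/
def PseudoMonotone (A : X → X →L[ℝ] ℝ) : Prop :=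
  ∀ (u : ℕ → X) (x : X), WeakConv u x →
    limsup (fun n => A (u n) (u n - x)) atTop ≤ 0 →
      ∀ y : X, A x (x - y) ≤ liminf (fun n => A (u n) (u n - y)) atTop

end

/-!
On a finite-dimensional subspace, coercivity produces a Galerkin solution through a Brouwer-type
zero theorem. The latter rests on the identity `∫_U det (1 + Dg) = vol U` for a Lipschitz map `g`
vanishing off `U`: for small `r` the map `x ↦ x + r g(x)` is a bijection of `U`, and both sides are
polynomials in `r`. A retraction of the ball onto its boundary would make the determinant vanish.

Galerkin solutions `u n` in increasing subspaces `F n` have a subsequence converging weakly to some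
`x`; pseudo-monotonicity yields `A (u n) → A x` weakly-*, so `A x = f` on every `F n`. Without
separability `⋃ F n` need not be dense, so the `F n` are built together with the `u n`: `F (n + 1)`
contains points of the unit ball that approximate every other point of the ball when tested against
`A (u m) - f`, `m ≤ n`. By weak compactness every unit vector `z` then agrees, on all the
functionals `A (u m) - f` and hence on their limit `A x - f`, with a weak limit of points of
`⋃ F n`.
-/

section FixedPoint

open MeasureTheory Metric

lemma exists_mem_segment_mem_frontier {E : Type*} [AddCommGroup E] [Module ℝ E]
    [TopologicalSpace E] [IsTopologicalAddGroup E] [ContinuousSMul ℝ E]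
    {s : Set E} {x y : E} (hx : x ∈ s) (hy : y ∉ s) : ∃ z ∈ segment ℝ x y, z ∈ frontier s := by
  by_contra! h
  have hxs : x ∈ interior s := by
    by_contra hxs
    exact h x (left_mem_segment ℝ x y) ⟨subset_closure hx, hxs⟩
  have hcover : segment ℝ x y ⊆ interior s ∪ (closure s)ᶜ := fun z hz => by
    by_contra! hzs
    simp only [Set.mem_union, Set.mem_compl_iff, not_or, not_not] at hzs
    exact h z hz ⟨hzs.2, hzs.1⟩
  have hdisj : Disjoint (interior s) (closure s)ᶜ :=
    Set.disjoint_compl_right_iff_subset.2 interior_subset_closure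
  exact hy <| interior_subset <| (convex_segment x y).isPreconnected.subset_left_of_subset_union
    isOpen_interior isClosed_closure.isOpen_compl hdisj hcover
    ⟨x, left_mem_segment ℝ x y, hxs⟩ (right_mem_segment ℝ x y)

lemma lipschitzWith_indicator_of_eq_zero_on_frontier {E F : Type*} [NormedAddCommGroup E]
    [NormedSpace ℝ E] [NormedAddCommGroup F] {s : Set E} {g : E → F} {C : NNReal}
    (hg : LipschitzOnWith C g (closure s)) (h0 : ∀ x ∈ frontier s, g x = 0) :
    LipschitzWith C (s.indicator g) := by
  have crossing {x y : E} (hx : x ∈ s) (hy : y ∉ s) : ‖g x‖ ≤ C * ‖x - y‖ := by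
    obtain ⟨z, hz, hzs⟩ := exists_mem_segment_mem_frontier hx hy
    calc ‖g x‖ = ‖g x - g z‖ := by rw [h0 z hzs, sub_zero]
      _ ≤ C * ‖x - z‖ := hg.norm_sub_le (subset_closure hx) (frontier_subset_closure hzs)
      _ ≤ C * ‖x - y‖ := by
        gcongr
        rw [norm_sub_rev x z, norm_sub_rev x y]
        exact norm_sub_le_of_mem_segment hz
  refine lipschitzWith_iff_norm_sub_le.2 fun x y => ?_
  by_cases hx : x ∈ s <;> by_cases hy : y ∈ s
  · simpa [hx, hy] using hg.norm_sub_le (subset_closure hx) (subset_closure hy)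
  · simpa [hx, hy] using crossing hx hy
  · simpa [hx, hy, norm_sub_rev x y] using crossing hy hx
  · simp only [Set.indicator_of_notMem hx, Set.indicator_of_notMem hy, sub_self, norm_zero]
    positivity

lemma bijective_add_of_lipschitzWith_lt_one {E : Type*} [NormedAddCommGroup E] [CompleteSpace E]
    {g : E → E} {C : NNReal} (hg : LipschitzWith C g) (hC : C < 1) :
    Function.Bijective fun x => x + g x := by
  refine ⟨(AntilipschitzWith.id.add_lipschitzWith hg (by simpa using hC)).injective, fun y => ?_⟩
  have hcontr : ContractingWith C fun x => y - g x :=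
    ⟨hC, by simpa using (LipschitzWith.const y).sub hg⟩
  exact ⟨hcontr.fixedPoint, (eq_sub_iff_add_eq.1 hcontr.fixedPoint_isFixedPt.symm)⟩

lemma image_eq_of_bijective_of_eqOn_compl {α : Type*} {f : α → α} {s : Set α}
    (hf : Function.Bijective f) (h : Set.EqOn f id sᶜ) : f '' s = s := by
  rw [← compl_inj_iff, ← Set.image_compl_eq hf, h.image_eq, Set.image_id]

lemma det_one_add_pos_of_norm_lt_one {E : Type*} [NormedAddCommGroup E] [NormedSpace ℝ E]
    [FiniteDimensional ℝ E] {M : E →L[ℝ] E} (hM : ‖M‖ < 1) : 0 < (1 + M).det := by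
  have hcont : ContinuousOn (fun s : ℝ => (1 + s • M).det) (Set.Icc 0 1) :=
    (ContinuousLinearMap.continuous_det.comp (by fun_prop)).continuousOn
  have hne : ∀ s ∈ Set.Icc (0 : ℝ) 1, (1 + s • M).det ≠ 0 := fun s hs => by
    have hsM : ‖-(s • M)‖ < 1 := by
      rw [norm_neg, norm_smul, Real.norm_of_nonneg hs.1]
      exact (mul_le_of_le_one_left (norm_nonneg M) hs.2).trans_lt hM
    have hunit : IsUnit (1 + s • M) := by simpa using isUnit_one_sub_of_norm_lt_one hsM
    exact (LinearMap.isUnit_iff_isUnit_det _).1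
      (hunit.map (ContinuousLinearMap.toLinearMapRingHom (R₁ := ℝ) (M₁ := E))) |>.ne_zero
  by_contra! hneg
  obtain ⟨s, hs, hs0⟩ := intermediate_value_Icc' (zero_le_one' ℝ) hcont
    (show (0 : ℝ) ∈ _ from ⟨by simpa using hneg, by simp [ContinuousLinearMap.det]⟩)
  exact hne s hs hs0

section Volume

variable {E : Type*} [NormedAddCommGroup E] [NormedSpace ℝ E] [FiniteDimensional ℝ E]

lemma exists_polynomial_eval_eq_det_one_add_smul (M : E →L[ℝ] E) :
    ∃ p : Polynomial ℝ, p.natDegree ≤ Module.finrank ℝ E ∧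
      ∀ r : ℝ, p.eval r = (1 + r • M).det := by
  let b := Module.finBasis ℝ E
  let A := LinearMap.toMatrix b b M
  refine ⟨Matrix.det ((Polynomial.X : Polynomial ℝ) • A.map Polynomial.C +
    (1 : Matrix _ _ ℝ).map Polynomial.C), ?_, fun r => ?_⟩
  · simpa using Polynomial.natDegree_det_X_add_C_le A 1
  · have hmatrix : LinearMap.toMatrix b b (1 + r • M : E →L[ℝ] E) = r • A + 1 := by
      simp [A, add_comm, LinearMap.toMatrix_one]
    rw [ContinuousLinearMap.det, ← LinearMap.det_toMatrix b, hmatrix,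
      ← Polynomial.coe_evalRingHom, RingHom.map_det]
    congr 1
    ext i j
    by_cases hij : i = j <;> simp [hij] <;> ring

lemma exists_det_one_add_eq_sum {s : Finset ℝ} (hs : Module.finrank ℝ E < s.card) :
    ∃ c : ℝ → ℝ, ∀ M : E →L[ℝ] E, (1 + M).det = ∑ r ∈ s, c r * (1 + r • M).det := by
  refine ⟨fun r => (Lagrange.basis s id r).eval 1, fun M => ?_⟩
  obtain ⟨p, hdeg, hp⟩ := exists_polynomial_eval_eq_det_one_add_smul M
  have hinterp := Lagrange.eq_interpolate (v := id) Function.injective_id.injOn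
    (Polynomial.degree_le_natDegree.trans_lt (Nat.cast_lt.2 (hdeg.trans_lt hs)))
  calc (1 + M).det = p.eval 1 := by rw [hp, one_smul]
    _ = ∑ r ∈ s, (Lagrange.basis s id r).eval 1 * (1 + r • M).det := by
      conv_lhs => rw [hinterp]
      simp [Lagrange.interpolate_apply, Polynomial.eval_finsetSum, hp, mul_comm]

variable [MeasurableSpace E] [BorelSpace E] {μ : Measure E} {U : Set E} {g : E → E} {C : NNReal}

lemma setIntegral_det_one_add_fderiv_of_lt_one [μ.IsAddHaarMeasure] (hU : MeasurableSet U)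
    (hg : LipschitzWith C g) (hC : C < 1) (hdiff : ∀ x ∈ U, DifferentiableAt ℝ g x)
    (h0 : ∀ x ∉ U, g x = 0) : ∫ x in U, (1 + fderiv ℝ g x).det ∂μ = μ.real U := by
  have hbij := bijective_add_of_lipschitzWith_lt_one hg hC
  have himage : (fun x => x + g x) '' U = U :=
    image_eq_of_bijective_of_eqOn_compl hbij fun x hx => by simp [h0 x hx]
  have hderiv : ∀ x ∈ U, HasFDerivWithinAt (fun x => x + g x) (1 + fderiv ℝ g x) U x :=
    fun x hx => ((hasFDerivAt_id x).add (hdiff x hx).hasFDerivAt).hasFDerivWithinAt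
  have hdet : ∀ x, 0 < (1 + fderiv ℝ g x).det := fun x =>
    det_one_add_pos_of_norm_lt_one ((norm_fderiv_le_of_lipschitz ℝ hg).trans_lt hC)
  have hchange := integral_image_eq_integral_abs_det_fderiv_smul μ hU hderiv hbij.injective.injOn
    fun _ => (1 : ℝ)
  simpa [himage, abs_of_pos (hdet _)] using hchange.symm

lemma integrableOn_det_one_add_smul_fderiv (hU : μ U ≠ ⊤) (hg : LipschitzWith C g) (r : ℝ) :
    IntegrableOn (fun x => (1 + r • fderiv ℝ g x).det) U μ := by
  have hcont : Continuous fun M : E →L[ℝ] E => (1 + r • M).det :=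
    ContinuousLinearMap.continuous_det.comp (by fun_prop)
  obtain ⟨K, hK⟩ := (isCompact_closedBall (0 : E →L[ℝ] E) C).exists_bound_of_continuousOn
    hcont.continuousOn
  refine Measure.integrableOn_of_bounded hU
    (hcont.measurable.comp (measurable_fderiv ℝ g)).aestronglyMeasurable
    (ae_of_all _ fun x => hK _ ?_)
  simpa using norm_fderiv_le_of_lipschitz ℝ hg

theorem setIntegral_det_one_add_fderiv [μ.IsAddHaarMeasure] (hU : MeasurableSet U) (hμ : μ U ≠ ⊤)
    (hg : LipschitzWith C g) (hdiff : ∀ x ∈ U, DifferentiableAt ℝ g x) (h0 : ∀ x ∉ U, g x = 0) :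
    ∫ x in U, (1 + fderiv ℝ g x).det ∂μ = μ.real U := by
  obtain ⟨s, hs, hcard⟩ := (Set.Ioo_infinite (show (0 : ℝ) < 1 / (C + 1) by
    positivity)).exists_subset_card_eq (Module.finrank ℝ E + 1)
  obtain ⟨c, hc⟩ := exists_det_one_add_eq_sum (E := E) (s := s) (by lia)
  have hsmall : ∀ r ∈ s, ∫ x in U, (1 + r • fderiv ℝ g x).det ∂μ = μ.real U := fun r hr => by
    have hlt : ‖r‖₊ * C < 1 := by
      have hr' := (lt_div_iff₀ (by positivity)).1 (hs hr).2
      rw [← NNReal.coe_lt_coe, NNReal.coe_mul, coe_nnnorm, Real.norm_of_nonneg (hs hr).1.le,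
        NNReal.coe_one]
      linarith [(hs hr).1]
    rw [← setIntegral_det_one_add_fderiv_of_lt_one hU ((lipschitzWith_smul r).comp hg) hlt
      (fun x hx => (hdiff x hx).const_smul r) (by simp +contextual [h0])]
    exact setIntegral_congr_fun hU fun x hx => by
      simp only [Function.comp_def, fderiv_fun_const_smul (hdiff x hx)]
  have hsum : ∑ r ∈ s, c r = 1 := by simpa [ContinuousLinearMap.det] using (hc 0).symm
  calc ∫ x in U, (1 + fderiv ℝ g x).det ∂μ
      = ∑ r ∈ s, c r * ∫ x in U, (1 + r • fderiv ℝ g x).det ∂μ := by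
        simp only [hc (fderiv ℝ g _)]
        rw [integral_finsetSum _ fun r _ =>
          (integrableOn_det_one_add_smul_fderiv hμ hg r).const_mul (c r)]
        simp only [integral_const_mul]
    _ = μ.real U := by rw [Finset.sum_congr rfl fun r hr => by rw [hsmall r hr],
        ← Finset.sum_mul, hsum, one_mul]

end Volume

section InnerProductSpace

variable {E : Type*} [NormedAddCommGroup E] [InnerProductSpace ℝ E]

lemma det_eq_zero_of_norm_eventually_eq [FiniteDimensional ℝ E] {f : E → E} {f' : E →L[ℝ] E}
    {x : E} {R : ℝ} (hf : HasFDerivAt f f' x) (hR : 0 < R)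
    (hnorm : ∀ᶠ y in 𝓝 x, ‖f y‖ = R) : f'.det = 0 := by
  by_contra hdet
  have hconst : HasFDerivAt (fun y => ‖f y‖ ^ 2) (0 : E →L[ℝ] ℝ) x :=
    (hasFDerivAt_const (R ^ 2) x).congr_of_eventuallyEq (hnorm.mono fun y hy => by simp only [hy])
  have horth : ∀ v, inner ℝ (f x) (f' v) = 0 := fun v => by
    simpa using DFunLike.congr_fun (hf.norm_sq.unique hconst) v
  obtain ⟨v, hv⟩ : ∃ v, f' v = f x := ((Module.End.isUnit_iff _).1
    ((LinearMap.isUnit_iff_isUnit_det _).2 (isUnit_iff_ne_zero.2 hdet))).2 (f x)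
  have hfx : f x = 0 := inner_self_eq_zero.1 (hv ▸ horth v)
  exact hR.ne (by rw [← hnorm.self_of_nhds, hfx, norm_zero])

variable [FiniteDimensional ℝ E]

theorem exists_norm_add_ne_of_lipschitzWith {g : E → E} {C : NNReal} {R : ℝ} (hR : 0 < R)
    (hg : LipschitzWith C g) (hdiff : ∀ x ∈ ball 0 R, DifferentiableAt ℝ g x)
    (h0 : ∀ x ∉ ball 0 R, g x = 0) : ∃ x ∈ ball 0 R, ‖x + g x‖ ≠ R := by
  borelize E
  by_contra! hnorm
  have hdet : ∀ x ∈ ball 0 R, (1 + fderiv ℝ g x).det = 0 := fun x hx =>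
    det_eq_zero_of_norm_eventually_eq ((hasFDerivAt_id x).add (hdiff x hx).hasFDerivAt) hR <|
      mem_of_superset (isOpen_ball.mem_nhds hx) hnorm
  have hvol := setIntegral_det_one_add_fderiv (μ := volume) measurableSet_ball
    measure_ball_lt_top.ne hg hdiff h0
  rw [setIntegral_congr_fun measurableSet_ball hdet, integral_zero] at hvol
  exact (ENNReal.toReal_pos (measure_ball_pos _ _ hR).ne' measure_ball_lt_top.ne).ne hvol

-- Otherwise `x ↦ R (x + g x) / ‖x + g x‖` would retract the ball onto its boundary.
lemma exists_add_eq_zero_of_contDiff {g : E → E} (hg : ContDiff ℝ 1 g)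
    (hsupp : HasCompactSupport g) : ∃ x, x + g x = 0 := by
  by_contra! hne
  obtain ⟨R, hR, hball⟩ := hsupp.isCompact.isBounded.subset_ball_lt 0 0
  have hg0 : ∀ x ∉ ball 0 R, g x = 0 := fun x hx => image_eq_zero_of_notMem_tsupport
    fun hx' => hx (hball hx')
  let k : E → E := fun x => (R / ‖x + g x‖) • (x + g x) - x
  have hk : ContDiff ℝ 1 k := by
    have hadd : ContDiff ℝ 1 fun x => x + g x := contDiff_id.add hg
    exact ((contDiff_const.div (hadd.norm ℝ hne) fun x => norm_ne_zero_iff.2 (hne x)).smul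
      hadd).sub contDiff_id
  have hk0 : ∀ x ∈ frontier (ball 0 R), k x = 0 := fun x hx => by
    have hxR : ‖x‖ = R := by simpa [frontier_ball _ hR.ne'] using hx
    have : g x = 0 := hg0 x (by simp [hxR])
    simp [k, this, hxR, hR.ne']
  obtain ⟨C, hC⟩ := hk.contDiffOn.exists_lipschitzOnWith one_ne_zero
    (convex_closedBall (0 : E) R) (isCompact_closedBall 0 R)
  rw [← closure_ball 0 hR.ne'] at hC
  have hkEq : ∀ x ∈ ball 0 R, (ball 0 R).indicator k =ᶠ[𝓝 x] k := fun x hx =>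
    mem_of_superset (isOpen_ball.mem_nhds hx) fun y hy => Set.indicator_of_mem hy k
  obtain ⟨x, hx, hxR⟩ := exists_norm_add_ne_of_lipschitzWith hR
    (lipschitzWith_indicator_of_eq_zero_on_frontier hC hk0)
    (fun x hx => (hk.differentiable one_ne_zero x).congr_of_eventuallyEq (hkEq x hx))
    fun x hx => Set.indicator_of_notMem hx k
  refine hxR ?_
  rw [Set.indicator_of_mem hx, add_sub_cancel, norm_smul, norm_div, norm_norm,
    Real.norm_of_nonneg hR.le, div_mul_cancel₀ _ (norm_ne_zero_iff.2 (hne x))]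

theorem exists_add_eq_zero_of_continuous {g : E → E} (hg : Continuous g)
    (hsupp : HasCompactSupport g) : ∃ x, x + g x = 0 := by
  by_contra! hne
  obtain ⟨k, hk, hkg, hksupp⟩ := hg.exists_contDiff_approx 1 (ε := fun x => ‖x + g x‖)
    (by fun_prop) fun x => norm_pos_iff.2 (hne x)
  obtain ⟨x, hx⟩ := exists_add_eq_zero_of_contDiff hk (hsupp.mono hksupp)
  have hdist := hkg x
  rw [eq_neg_of_add_eq_zero_right hx, dist_eq_norm, ← neg_add', norm_neg] at hdist
  exact hdist.false

theorem exists_eq_zero_of_eventually_inner_pos {P : E → E} (hP : Continuous P)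
    (hpos : ∀ᶠ x in Bornology.cobounded E, 0 < inner ℝ (P x) x) : ∃ x, P x = 0 := by
  have hbdd : Bornology.IsBounded {x | 0 < inner ℝ (P x) x}ᶜ :=
    Bornology.isBounded_def.2 (by rwa [compl_compl])
  obtain ⟨R, hR, hball⟩ := hbdd.subset_ball_lt 0 0
  let b : ContDiffBump (0 : E) := ⟨R, R + 1, hR, by linarith⟩
  obtain ⟨x, hx⟩ := exists_add_eq_zero_of_continuous (g := fun x => b x • (P x - x))
    (b.continuous.smul (by fun_prop)) b.hasCompactSupport.smul_right
  refine ⟨x, ?_⟩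
  have hxR : x ∈ ball 0 R := hball fun hPx : 0 < inner ℝ (P x) x => by
    have hinner : inner ℝ (x + b x • (P x - x)) x =
        (1 - b x) * ‖x‖ ^ 2 + b x * inner ℝ (P x) x := by
      simp only [inner_add_left, real_inner_smul_left, inner_sub_left, real_inner_self_eq_norm_sq]
      ring
    have hx0 : 0 < ‖x‖ ^ 2 := by
      have : x ≠ 0 := by rintro rfl; simp at hPx
      positivity
    have hcombo : 0 < (1 - b x) * ‖x‖ ^ 2 + b x * inner ℝ (P x) x :=
      convex_Ioi (0 : ℝ) hx0 hPx (sub_nonneg.2 b.le_one) b.nonneg (sub_add_cancel 1 (b x))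
    rw [← hinner, hx, inner_zero_left] at hcombo
    exact hcombo.false
  simpa [b.one_of_mem_closedBall (ball_subset_closedBall hxR)] using hx

end InnerProductSpace

end FixedPoint

section FiniteDimensional

theorem exists_eq_zero_of_eventually_apply_self_pos {E : Type*} [NormedAddCommGroup E]
    [NormedSpace ℝ E] [FiniteDimensional ℝ E] {P : E → E →L[ℝ] ℝ} (hP : Continuous P)
    (hpos : ∀ᶠ x in Bornology.cobounded E, 0 < P x x) : ∃ x, P x = 0 := by
  let e := (toEuclidean (E := E)).symm
  let Q := fun y => (InnerProductSpace.toDual ℝ _).symm ((P (e y)).comp e.toContinuousLinearMap)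
  have hQ : ∀ y z, inner ℝ (Q y) z = P (e y) (e z) := by simp [Q]
  obtain ⟨y, hy⟩ := exists_eq_zero_of_eventually_inner_pos (P := Q) (by fun_prop) <| by
    simpa only [hQ] using e.antilipschitz.tendsto_cobounded.eventually hpos
  refine ⟨e y, ContinuousLinearMap.ext fun v => ?_⟩
  simpa [hy] using (hQ y (e.symm v)).symm

variable {X : Type*} [NormedAddCommGroup X] [NormedSpace ℝ X]

theorem exists_mem_submodule_apply_eq {A : X → X →L[ℝ] ℝ} (hA : ∀ z, Continuous fun x => A x z)
    {f : X →L[ℝ] ℝ} (hpos : ∀ᶠ x in Bornology.cobounded X, f x < A x x)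
    (F : Submodule ℝ X) [FiniteDimensional ℝ F] : ∃ u ∈ F, ∀ v ∈ F, A u v = f v := by
  obtain ⟨u, hu⟩ := exists_eq_zero_of_eventually_apply_self_pos
    (P := fun w : F => (A w - f).comp F.subtypeL)
    (continuous_clm_apply.2 fun v => ((hA v).comp continuous_subtype_val).sub continuous_const)
    (by simpa using F.subtypeₗᵢ.antilipschitz.tendsto_cobounded.eventually hpos)
  exact ⟨u, u.2, fun v hv => sub_eq_zero.1 (DFunLike.congr_fun hu ⟨v, hv⟩)⟩

end FiniteDimensional

section WeakConvergence

variable {X : Type*} [NormedAddCommGroup X] [NormedSpace ℝ X] {u : ℕ → X} {x : X}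

lemma WeakConv.exists_norm_le (hu : WeakConv u x) : ∃ M, ∀ n, ‖u n‖ ≤ M := by
  obtain ⟨M, hM⟩ := banach_steinhaus (g := fun n => NormedSpace.inclusionInDoubleDual ℝ X (u n))
    fun f => by
      obtain ⟨K, hK⟩ := (Metric.isBounded_range_of_tendsto _ (hu f)).exists_norm_le
      exact ⟨K, fun n => hK _ ⟨n, rfl⟩⟩
  exact ⟨M, fun n => (NormedSpace.inclusionInDoubleDualLi ℝ).norm_map (u n) ▸ hM n⟩

lemma WeakConv.mem_of_isClosed_of_convex {s : Set X} (hu : WeakConv u x) (hs : IsClosed s)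
    (hconv : Convex ℝ s) (hmem : ∀ n, u n ∈ s) : x ∈ s := by
  by_contra hx
  obtain ⟨f, c, hfs, hfx⟩ := geometric_hahn_banach_closed_point hconv hs hx
  exact hfx.not_ge (le_of_tendsto' (hu f) fun n => (hfs _ (hmem n)).le)

/-- The sequential form of reflexivity: every bounded sequence has a weakly convergent
subsequence. -/
def BoundedSeqHasWeakConvSubseq (X : Type*) [NormedAddCommGroup X] [NormedSpace ℝ X] : Prop :=
  ∀ v : ℕ → X, (∃ M : ℝ, ∀ n, ‖v n‖ ≤ M) →
    ∃ (φ : ℕ → ℕ) (z : X), StrictMono φ ∧ WeakConv (fun n => v (φ n)) z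

end WeakConvergence

section PseudoMonotone

variable {X : Type*} [NormedAddCommGroup X] [NormedSpace ℝ X] {A : X → X →L[ℝ] ℝ} {u : ℕ → X}
  {x : X}

lemma WeakConv.exists_norm_apply_le (hu : WeakConv u x)
    (hbdd : ∀ M : Set X, Bornology.IsBounded M → Bornology.IsBounded (A '' M)) :
    ∃ K, ∀ n, ‖A (u n)‖ ≤ K := by
  obtain ⟨M, hM⟩ := hu.exists_norm_le
  obtain ⟨K, hK⟩ := (hbdd _ (Metric.isBounded_closedBall (x := 0) (r := M))).exists_norm_le
  exact ⟨K, fun n => hK _ ⟨u n, by simpa using hM n, rfl⟩⟩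

lemma PseudoMonotone.eventually_lt_apply (hpm : PseudoMonotone A)
    (hbdd : ∀ M : Set X, Bornology.IsBounded M → Bornology.IsBounded (A '' M))
    (hu : WeakConv u x) (h0 : Tendsto (fun n => A (u n) (u n - x)) atTop (𝓝 0)) {z : X} {c : ℝ}
    (hc : c < A x z) : ∀ᶠ n in atTop, c < A (u n) z := by
  have hsplit : ∀ n, A (u n) (u n - (x - z)) = A (u n) (u n - x) + A (u n) z := fun n => by
    rw [← map_add, sub_sub_eq_add_sub, sub_add_eq_add_sub]
  have hliminf := hpm u x hu h0.limsup_eq.le (x - z)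
  simp only [sub_sub_cancel, hsplit] at hliminf
  obtain ⟨K, hK⟩ := hu.exists_norm_apply_le hbdd
  have hAz : IsBoundedUnder (· ≥ ·) atTop fun n => A (u n) z :=
    isBoundedUnder_of
      ⟨-(K * ‖z‖), fun n => neg_le_of_abs_le ((A (u n)).le_of_opNorm_le (hK n) z)⟩
  obtain ⟨d, hcd, hd⟩ := exists_between hc
  have hsum := eventually_lt_of_lt_liminf (hd.trans_le hliminf)
    (isBoundedUnder_ge_add h0.isBoundedUnder_ge hAz)
  filter_upwards [hsum, h0.eventually_lt_const (sub_pos.2 hcd)] with n hn hn0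
  linarith

theorem PseudoMonotone.tendsto_apply (hpm : PseudoMonotone A)
    (hbdd : ∀ M : Set X, Bornology.IsBounded M → Bornology.IsBounded (A '' M))
    (hu : WeakConv u x) (h0 : Tendsto (fun n => A (u n) (u n - x)) atTop (𝓝 0)) (z : X) :
    Tendsto (fun n => A (u n) z) atTop (𝓝 (A x z)) := by
  refine tendsto_order.2 ⟨fun c hc => hpm.eventually_lt_apply hbdd hu h0 hc, fun c hc => ?_⟩
  have hneg : -c < A x (-z) := by simpa using hc
  simpa using hpm.eventually_lt_apply hbdd hu h0 hneg

theorem PseudoMonotone.continuous_apply (hpm : PseudoMonotone A)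
    (hbdd : ∀ M : Set X, Bornology.IsBounded M → Bornology.IsBounded (A '' M)) (z : X) :
    Continuous fun x => A x z := by
  refine continuous_iff_seqContinuous.2 fun u x hu => ?_
  have hweak : WeakConv u x := fun f => (f.continuous.tendsto x).comp hu
  obtain ⟨K, hK⟩ := hweak.exists_norm_apply_le hbdd
  have hzero : Tendsto (fun n => K * ‖u n - x‖) atTop (𝓝 0) := by
    simpa using (tendsto_iff_norm_sub_tendsto_zero.1 hu).const_mul K
  exact hpm.tendsto_apply hbdd hweak
    (squeeze_zero_norm (fun n => (A (u n)).le_of_opNorm_le (hK n) _) hzero) z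

end PseudoMonotone

section WeakNet

variable {X : Type*} [NormedAddCommGroup X] [NormedSpace ℝ X]

/-- `S` is an `ε`-net of the closed unit ball for the seminorms `|φ|`, `φ ∈ Φ`, with centers that
are themselves in the unit ball. -/
def IsWeakNet (Φ : Set (X →L[ℝ] ℝ)) (ε : ℝ) (S : Set X) : Prop :=
  ∀ z, ‖z‖ ≤ 1 → ∃ s ∈ S, ‖s‖ ≤ 1 ∧ ∀ φ ∈ Φ, dist (φ s) (φ z) ≤ ε

lemma IsWeakNet.mono {Φ Ψ : Set (X →L[ℝ] ℝ)} {ε : ℝ} {S T : Set X} (hS : IsWeakNet Φ ε S)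
    (hΨ : Ψ ⊆ Φ) (hT : S ⊆ T) : IsWeakNet Ψ ε T := fun z hz =>
  let ⟨s, hs, hs1, hsz⟩ := hS z hz
  ⟨s, hT hs, hs1, fun φ hφ => hsz φ (hΨ hφ)⟩

lemma exists_finset_isWeakNet {Φ : Set (X →L[ℝ] ℝ)} (hΦ : Φ.Finite) {ε : ℝ} (hε : 0 < ε) :
    ∃ t : Finset X, IsWeakNet Φ ε t := by
  classical
  have := hΦ.fintype
  let T : X →L[ℝ] (Φ → ℝ) := ContinuousLinearMap.pi fun φ => φ.1
  have hbdd : Bornology.IsBounded (T '' Metric.closedBall 0 1) :=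
    T.lipschitz.isBounded_image Metric.isBounded_closedBall
  have htb : TotallyBounded (T '' Metric.closedBall 0 1) :=
    hbdd.isCompact_closure.totallyBounded.subset subset_closure
  obtain ⟨c, hcsub, hcfin, hcover⟩ := Metric.finite_approx_of_totallyBounded htb ε hε
  lift c to Finset (Φ → ℝ) using hcfin
  obtain ⟨t, ht, rfl⟩ := Finset.subset_set_image_iff.1 hcsub
  refine ⟨t, fun z hz => ?_⟩
  obtain ⟨_, hs, hzs⟩ := Set.mem_iUnion₂.1 (hcover ⟨z, mem_closedBall_zero_iff.2 hz, rfl⟩)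
  obtain ⟨s, hst, rfl⟩ := Finset.mem_image.1 hs
  exact ⟨s, hst, mem_closedBall_zero_iff.1 (ht hst), fun φ hφ =>
    (dist_le_pi_dist (T s) (T z) ⟨φ, hφ⟩).trans (Metric.mem_ball'.1 hzs).le⟩

-- A point `z` of the unit ball and a weak cluster point `y` of its approximations by the nets are
-- not separated by any `w m`, hence not by `g`, and `g y = 0`.
lemma eq_zero_of_isWeakNet (hX : BoundedSeqHasWeakConvSubseq X) {w : ℕ → X →L[ℝ] ℝ}
    {S : ℕ → Set X} (hS : ∀ n, IsWeakNet (w '' Set.Iic n) (1 / (n + 1)) (S n))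
    {g : X →L[ℝ] ℝ} (hgS : ∀ n, ∀ s ∈ S n, g s = 0) (hgw : ∀ z, (∀ m, w m z = 0) → g z = 0) :
    g = 0 := by
  suffices h : ∀ z, ‖z‖ = 1 → g z = 0 from
    norm_le_zero_iff.1 (g.opNorm_le_of_unit_norm le_rfl fun z hz => by simp [h z hz])
  intro z hz
  choose s hsS hs1 hsz using fun n => hS n z hz.le
  obtain ⟨ψ, y, hψ, hy⟩ := hX s ⟨1, hs1⟩
  have hwy : ∀ m, w m y = w m z := fun m => by
    refine tendsto_nhds_unique (hy (w m)) (tendsto_iff_dist_tendsto_zero.2 ?_)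
    refine squeeze_zero' (Eventually.of_forall fun _ => dist_nonneg) ?_
      (tendsto_one_div_add_atTop_nhds_zero_nat.comp hψ.tendsto_atTop)
    filter_upwards [hψ.tendsto_atTop.eventually_ge_atTop m] with n hn
    exact hsz (ψ n) (w m) ⟨m, hn, rfl⟩
  have hgy : g y = 0 := tendsto_nhds_unique (hy g) <| by
    simp only [hgS _ _ (hsS _), tendsto_const_nhds]
  rw [← hgy, ← sub_eq_zero, ← map_sub]
  exact hgw _ fun m => by rw [map_sub, hwy, sub_self]

end WeakNet

section Galerkin

variable {X : Type*} [NormedAddCommGroup X] [NormedSpace ℝ X]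

/-- `u n` is a Galerkin approximation in the subspace `F n` to a solution of `A x = f`, where the
subspaces `F n` increase with `n`. -/
structure IsGalerkinSequence (A : X → X →L[ℝ] ℝ) (f : X →L[ℝ] ℝ) (F : ℕ → Submodule ℝ X)
    (u : ℕ → X) : Prop where
  monotone : Monotone F
  mem : ∀ n, u n ∈ F n
  apply_eq : ∀ n, ∀ v ∈ F n, A (u n) v = f v

variable {A : X → X →L[ℝ] ℝ} {f : X →L[ℝ] ℝ} {F : ℕ → Submodule ℝ X} {u : ℕ → X} {x : X}

namespace IsGalerkinSequence

lemma subseq (h : IsGalerkinSequence A f F u) {φ : ℕ → ℕ} (hφ : Monotone φ) :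
    IsGalerkinSequence A f (fun n => F (φ n)) fun n => u (φ n) :=
  ⟨h.monotone.comp hφ, fun n => h.mem (φ n), fun n => h.apply_eq (φ n)⟩

lemma tendsto_apply_of_mem (h : IsGalerkinSequence A f F u) {m : ℕ} {v : X} (hv : v ∈ F m) :
    Tendsto (fun n => A (u n) v) atTop (𝓝 (f v)) :=
  tendsto_atTop_of_eventually_const fun n hn => h.apply_eq n v (h.monotone hn hv)

lemma exists_norm_le (h : IsGalerkinSequence A f F u)
    (hpos : ∀ᶠ x in Bornology.cobounded X, f x < A x x) : ∃ M, ∀ n, ‖u n‖ ≤ M := by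
  have hbdd : Bornology.IsBounded {x | f x < A x x}ᶜ :=
    Bornology.isBounded_def.2 (by rwa [compl_compl])
  obtain ⟨M, hM⟩ := hbdd.exists_norm_le
  exact ⟨M, fun n => hM _ (h.apply_eq n _ (h.mem n)).not_gt⟩

lemma tendsto_apply_weakLimit (h : IsGalerkinSequence A f F u) (hu : WeakConv u x) {K : ℝ}
    (hK : ∀ n, ‖A (u n)‖ ≤ K) : Tendsto (fun n => A (u n) x) atTop (𝓝 (f x)) := by
  have hequi : Equicontinuous fun n => (A (u n) : X → ℝ) :=
    (LipschitzWith.uniformEquicontinuous _ K.toNNReal fun n =>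
      (A (u n)).lipschitz.weaken (NNReal.le_toNNReal_of_coe_le (hK n))).equicontinuous
  have hsub : ((⨆ n, F n : Submodule ℝ X) : Set X) ⊆
      {y | Tendsto (fun n => A (u n) y) atTop (𝓝 (f y))} := fun y hy =>
    let ⟨m, hm⟩ := (Submodule.mem_iSup_of_directed _ h.monotone.directed_le).1 hy
    h.tendsto_apply_of_mem hm
  have hx : x ∈ closure ((⨆ n, F n : Submodule ℝ X) : Set X) :=
    hu.mem_of_isClosed_of_convex isClosed_closure (Submodule.convex _).closure fun n =>
      subset_closure (Submodule.mem_iSup_of_mem n (h.mem n))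
  exact closure_minimal hsub (hequi.isClosed_setOfPred_tendsto f.continuous) hx

theorem tendsto_apply (h : IsGalerkinSequence A f F u) (hpm : PseudoMonotone A)
    (hbdd : ∀ M : Set X, Bornology.IsBounded M → Bornology.IsBounded (A '' M))
    (hu : WeakConv u x) (z : X) : Tendsto (fun n => A (u n) z) atTop (𝓝 (A x z)) := by
  obtain ⟨K, hK⟩ := hu.exists_norm_apply_le hbdd
  refine hpm.tendsto_apply hbdd hu ?_ z
  simpa [h.apply_eq _ _ (h.mem _)] using (hu f).sub (h.tendsto_apply_weakLimit hu hK)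

end IsGalerkinSequence

theorem exists_isGalerkinSequence_isWeakNet (hA : ∀ z, Continuous fun x => A x z)
    (hpos : ∀ᶠ x in Bornology.cobounded X, f x < A x x) :
    ∃ (F : ℕ → Submodule ℝ X) (u : ℕ → X), IsGalerkinSequence A f F u ∧
      ∀ n, IsWeakNet ((fun m => A (u m) - f) '' Set.Iic n) (1 / (n + 1)) (F (n + 1)) := by
  classical
  choose u hmem happly using fun t : Finset X =>
    exists_mem_submodule_apply_eq hA hpos (Submodule.span ℝ (t : Set X))
  choose net hnet using fun (t : Finset X) (n : ℕ) => exists_finset_isWeakNet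
    ((Set.finite_Iic t).image fun s => A (u s) - f) (Nat.one_div_pos_of_nat (α := ℝ) (n := n))
  obtain ⟨t, htsucc⟩ : ∃ t : ℕ → Finset X, ∀ n, t (n + 1) = t n ∪ net (t n) n :=
    ⟨fun n => Nat.rec ∅ (fun k s => s ∪ net s k) n, fun _ => rfl⟩
  have ht : Monotone t := monotone_nat_of_le_succ fun n =>
    htsucc n ▸ Finset.subset_union_left
  refine ⟨fun n => Submodule.span ℝ (t n), fun n => u (t n),
    ⟨fun m n hmn => Submodule.span_mono (ht hmn), fun n => hmem (t n), fun n => happly (t n)⟩,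
    fun n => (hnet (t n) n).mono ?_ ?_⟩
  · rintro _ ⟨m, hm, rfl⟩
    exact ⟨t m, ht hm, rfl⟩
  · have hsub : net (t n) n ⊆ t (n + 1) := htsucc n ▸ Finset.subset_union_right
    exact (Finset.coe_subset.2 hsub).trans Submodule.subset_span

theorem PseudoMonotone.exists_eq (hX : BoundedSeqHasWeakConvSubseq X) (hpm : PseudoMonotone A)
    (hbdd : ∀ M : Set X, Bornology.IsBounded M → Bornology.IsBounded (A '' M))
    (hpos : ∀ᶠ x in Bornology.cobounded X, f x < A x x) : ∃ x, A x = f := by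
  obtain ⟨F, u, hgal, hnet⟩ :=
    exists_isGalerkinSequence_isWeakNet (hpm.continuous_apply hbdd) hpos
  obtain ⟨φ, x, hφ, hx⟩ := hX u (hgal.exists_norm_le hpos)
  have hlim := (hgal.subseq hφ.monotone).tendsto_apply hpm hbdd hx
  refine ⟨x, sub_eq_zero.1 (eq_zero_of_isWeakNet hX hnet (fun n s hs => ?_) fun z hz => ?_)⟩
  · exact sub_eq_zero.2 (tendsto_nhds_unique (hlim s)
      ((hgal.tendsto_apply_of_mem hs).comp hφ.tendsto_atTop))
  · have hfz : ∀ m, A (u m) z = f z := fun m => sub_eq_zero.1 (hz m)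
    exact sub_eq_zero.2 (tendsto_nhds_unique (hlim z)
      (tendsto_const_nhds.congr fun n => (hfz (φ n)).symm))

end Galerkin

theorem stmt_10 {X : Type*} [NormedAddCommGroup X] [NormedSpace ℝ X]
    [CompleteSpace X]
    -- reflexivity, encoded via weak sequential compactness of bounded sequences
    (hrefl : ∀ v : ℕ → X, (∃ M : ℝ, ∀ n, ‖v n‖ ≤ M) →
      ∃ (φ : ℕ → ℕ) (z : X), StrictMono φ ∧ WeakConv (fun n => v (φ n)) z)
    (A : X → X →L[ℝ] ℝ)
    (hbdd : ∀ M : Set X, Bornology.IsBounded M → Bornology.IsBounded (A '' M))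
    (hpm : PseudoMonotone A)
    (hcoer : Tendsto (fun x : X => A x x / ‖x‖) (Bornology.cobounded X) atTop) :
    Function.Surjective A := by
  intro f
  refine hpm.exists_eq hrefl hbdd ?_
  filter_upwards [hcoer.eventually_gt_atTop ‖f‖,
    tendsto_norm_cobounded_atTop.eventually_gt_atTop 0] with x hx hx0
  calc f x ≤ ‖f‖ * ‖x‖ := (Real.le_norm_self _).trans (f.le_opNorm x)
    _ < A x x := (lt_div_iff₀ hx0).1 hx
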